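/- arXiv:2604.20097 — 6 statements merged into one kernel-verified Lean document; each statement's English description precedes it below -/
import Mathlib

section
/- Let G be a finite simple connected graph and let S be a Carathéodory independent set of G with |S| ≥ 2. Then the subgraph of G induced by S is a forest containing at least one edge. -/
open SimpleGraph

/-- A set `S` is cycle convex in `G` if no vertex `w` outside `S` is such that the
subgraph induced by `S ∪ {w}` contains a cycle through `w`. -/
def IsCycleConvex {V : Type*} (G : SimpleGraph V) (S : Set V) : Prop :=
  ∀ w : V, w ∉ S →
    ¬ ∃ c : (G.induce (S ∪ {w})).Walk ⟨w, Set.mem_union_right S rfl⟩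
        ⟨w, Set.mem_union_right S rfl⟩, c.IsCycle

/-- The cycle convex hull of `S`: the smallest cycle convex set containing `S`. -/
def cycleHull {V : Type*} (G : SimpleGraph V) (S : Set V) : Set V :=
  ⋂₀ {T : Set V | S ⊆ T ∧ IsCycleConvex G T}

/-- `S` is Carathéodory independent in the cycle convexity of `G`. -/
def CIndep {V : Type*} (G : SimpleGraph V) (S : Set V) : Prop :=
  ∃ p ∈ cycleHull G S, ∀ a ∈ S, p ∉ cycleHull G (S \ {a})

/-- The Carathéodory number of `G` in the cycle convexity. -/
noncomputable def carNumber {V : Type*} (G : SimpleGraph V) : ℕ :=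
  sSup {n : ℕ | ∃ S : Set V, CIndep G S ∧ S.ncard = n}

theorem subset_cycleHull {V : Type*} (G : SimpleGraph V) (S : Set V) : S ⊆ cycleHull G S :=
  fun _ hx _ hT => hT.1 hx

/-- The second edge of a cycle does not return to the base point. -/
theorem SimpleGraph.Walk.IsCycle.exists_adj_adj_ne {V : Type*} {G : SimpleGraph V} {v : V}
    {c : G.Walk v v} (hc : c.IsCycle) : ∃ u x, G.Adj v u ∧ G.Adj u x ∧ x ≠ v := by
  cases c with
  | nil => exact absurd rfl hc.ne_nil
  | @cons _ u _ h p =>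
    rw [Walk.cons_isCycle_iff] at hc
    cases p with
    | nil => exact absurd h (G.irrefl)
    | @cons _ x _ h' q =>
      refine ⟨u, x, h, h', ?_⟩
      rintro rfl
      exact hc.2 (by simp [Sym2.eq_swap])

/-- Independent sets are cycle convex. -/
theorem SimpleGraph.IsIndepSet.isCycleConvex {V : Type*} {G : SimpleGraph V} {S : Set V}
    (hS : G.IsIndepSet S) : IsCycleConvex G S := by
  rintro w - ⟨c, hc⟩
  obtain ⟨⟨u, hu⟩, ⟨x, hx⟩, hwu, hux, hxw⟩ := hc.exists_adj_adj_ne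
  have hwu : G.Adj w u := hwu
  have hux : G.Adj u x := hux
  have hxS : x ∈ S := hx.resolve_right fun h => hxw (Subtype.ext h)
  have huS : u ∈ S := hu.resolve_right hwu.ne'
  exact hS huS hxS hux.ne hux

/-- Deleting a vertex lying on a cycle of the subgraph induced by `S` preserves the hull of `S`. -/
theorem cycleHull_subset_cycleHull_diff_singleton {V : Type*} {G : SimpleGraph V} {S : Set V}
    {v : S} {c : (G.induce S).Walk v v} (hc : c.IsCycle) :
    cycleHull G S ⊆ cycleHull G (S \ {v.1}) := by
  rintro p hp T ⟨hST, hT⟩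
  have hle : S ⊆ T ∪ {v.1} := fun x hx => by
    by_cases hxv : x = v.1
    · exact Or.inr hxv
    · exact Or.inl (hST ⟨hx, hxv⟩)
  have hv : v.1 ∈ T := by
    by_contra hv
    exact hT v.1 hv ⟨c.map (G.induceHomOfLE hle).toHom,
      hc.map (G.induceHomOfLE hle).injective⟩
  refine hp T ⟨fun x hx => (hle hx).elim id ?_, hT⟩
  rintro rfl
  exact hv

/-- Lemma 1(a)+(e): a Caratheodory independent set of size at least 2 in a finite
connected graph induces a forest containing at least one edge. -/
theorem stmt_0 {V : Type*} [Fintype V] (G : SimpleGraph V) (hG : G.Connected)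
    (S : Set V) (hS : CIndep G S) (h2 : 2 ≤ S.ncard) :
    (G.induce S).IsAcyclic ∧ ∃ u ∈ S, ∃ v ∈ S, G.Adj u v := by
  obtain ⟨p, hp, hpS⟩ := hS
  refine ⟨fun v c hc => hpS v v.2 (cycleHull_subset_cycleHull_diff_singleton hc hp), ?_⟩
  by_contra! hind
  have hpmem : p ∈ S := hp S
    ⟨subset_rfl, IsIndepSet.isCycleConvex fun u hu v hv _ => hind u hu v hv⟩
  obtain ⟨a, ha, hap⟩ := Set.exists_ne_of_one_lt_ncard h2 p
  exact hpS a ha (subset_cycleHull G _ ⟨hpmem, hap.symm⟩)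
end

section
/- Let G be a finite simple connected graph and let S be a Carathéodory independent set of G with |S| ≥ 2. Then every vertex of S lies on some cycle of G. -/
open SimpleGraph

/-- Cycle convexity expressed with walks of the ambient graph. -/
theorem isCycleConvex_iff {V : Type*} (G : SimpleGraph V) (S : Set V) :
    IsCycleConvex G S ↔
      ∀ w ∉ S, ∀ c : G.Walk w w, c.IsCycle → ¬ ∀ x ∈ c.support, x ∈ S ∪ {w} := by
  refine forall₂_congr fun w _ => ?_
  constructor
  · intro h c hc hsub
    refine h ⟨c.induce _ hsub, ?_⟩
    rw [← Walk.isCycle_map_iff_of_injective (f := (Embedding.induce (G := G) (S ∪ {w})).toHom)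
      Subtype.val_injective, Walk.map_induce]
    exact hc
  · rintro h ⟨c, hc⟩
    refine h (c.map (Embedding.induce (G := G) (S ∪ {w})).toHom)
      (hc.map Subtype.val_injective) fun x hx => ?_
    obtain ⟨y, -, rfl⟩ := List.mem_map.1 (Walk.support_map _ c ▸ hx)
    exact y.2

theorem isCycleConvex_cycleHull {V : Type*} (G : SimpleGraph V) (S : Set V) :
    IsCycleConvex G (cycleHull G S) := by
  rw [isCycleConvex_iff]
  intro w hw c hc hsub
  simp only [cycleHull, Set.mem_sInter, not_forall] at hw
  obtain ⟨T, hT, hwT⟩ := hw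
  exact (isCycleConvex_iff G T).1 hT.2 w hwT c hc fun x hx =>
    (hsub x hx).imp_left fun h => Set.mem_sInter.1 h T hT

/-- Adding a vertex that lies on no cycle preserves cycle convexity. -/
theorem IsCycleConvex.insert {V : Type*} {G : SimpleGraph V} {T : Set V}
    (hT : IsCycleConvex G T) {v : V} (hv : ∀ c : G.Walk v v, ¬ c.IsCycle) :
    IsCycleConvex G (insert v T) := by
  classical
  rw [isCycleConvex_iff] at hT ⊢
  intro w hw c hc hsub
  refine hT w (fun h => hw (Set.mem_insert_of_mem v h)) c hc fun x hx => ?_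
  have hxv : x ≠ v := by
    rintro rfl
    exact hv _ (hc.rotate hx)
  rcases hsub x hx with (h | h) | h
  · exact absurd h hxv
  · exact Or.inl h
  · exact Or.inr h

/-- Lemma 1(b): every vertex of a Caratheodory independent set of size at least 2
lies on some cycle of the graph. -/
theorem stmt_1 {V : Type*} [Fintype V] (G : SimpleGraph V) (hG : G.Connected)
    (S : Set V) (hS : CIndep G S) (h2 : 2 ≤ S.ncard) :
    ∀ v ∈ S, ∃ c : G.Walk v v, c.IsCycle := by
  intro v hvS
  by_contra! hv
  obtain ⟨p, hp, hindep⟩ := hS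
  have hsub : S ⊆ insert v (cycleHull G (S \ {v})) := fun x hx =>
    or_iff_not_imp_left.2 fun hxv => subset_cycleHull G _ ⟨hx, hxv⟩
  have hpv : p = v := (Set.mem_sInter.1 hp _
    ⟨hsub, (isCycleConvex_cycleHull G _).insert hv⟩).resolve_right (hindep v hvS)
  obtain ⟨a, haS, hav⟩ := Set.exists_ne_of_one_lt_ncard h2 v
  exact hindep a haS (subset_cycleHull G _ (hpv ▸ ⟨hvS, hav.symm⟩))
end

section
/- Let G be a finite simple connected graph with at least 3 vertices. If for every edge uv ∈ E(G) the set {u,v} is a hull set of G (i.e., hull({u,v}) = V(G)), then car(G) = 2. -/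
open SimpleGraph

theorem cycleHull_mono {V : Type*} (G : SimpleGraph V) {S T : Set V} (h : S ⊆ T) :
    cycleHull G S ⊆ cycleHull G T :=
  Set.sInter_subset_sInter fun _ hU => ⟨h.trans hU.1, hU.2⟩

theorem SimpleGraph.IsIndepSet.cycleHull_eq {V : Type*} {G : SimpleGraph V} {S : Set V}
    (hS : G.IsIndepSet S) : cycleHull G S = S :=
  Set.Subset.antisymm (Set.sInter_subset_of_mem ⟨Set.Subset.rfl, hS.isCycleConvex⟩)
    (Set.subset_sInter fun _ hT => hT.1)

theorem cycleHull_singleton {V : Type*} (G : SimpleGraph V) (v : V) :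
    cycleHull G {v} = {v} :=
  IsIndepSet.cycleHull_eq (Set.pairwise_singleton v _)

/-- A Carathéodory independent set without edges has at most one vertex. -/
theorem CIndep.subsingleton_of_isIndepSet {V : Type*} {G : SimpleGraph V} {S : Set V}
    (h : CIndep G S) (hS : G.IsIndepSet S) : S.Subsingleton := by
  obtain ⟨p, hp, hpS⟩ := h
  rw [hS.cycleHull_eq] at hp
  have key : ∀ a ∈ S, a = p := by
    intro a ha
    by_contra hap
    apply hpS a ha
    rw [IsIndepSet.cycleHull_eq (hS.mono Set.sdiff_subset)]
    exact ⟨hp, fun h => hap h.symm⟩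
  exact fun a ha b hb => (key a ha).trans (key b hb).symm

/-- Proposition 2(b): if every edge of a finite connected graph on at least 3
vertices is a hull set, then its Caratheodory number is 2. -/
theorem stmt_7 {V : Type*} [Fintype V] (G : SimpleGraph V) (hG : G.Connected)
    (hn : 3 ≤ Fintype.card V)
    (hhull : ∀ u v : V, G.Adj u v → cycleHull G {u, v} = Set.univ) :
    carNumber G = 2 := by
  refine IsGreatest.csSup_eq ⟨?_, ?_⟩
  · have : Nontrivial V := Fintype.one_lt_card_iff_nontrivial.mp (by omega)
    obtain ⟨u⟩ := hG.nonempty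
    obtain ⟨v, huv⟩ := hG.preconnected.exists_adj_of_nontrivial u
    have hcard : ({u, v} : Set V).ncard = 2 := Set.ncard_pair huv.ne
    obtain ⟨p, -, hp⟩ := Set.exists_mem_notMem_of_ncard_lt_ncard
      (s := ({u, v} : Set V)) (t := Set.univ)
      (by rw [hcard, Set.ncard_univ, Nat.card_eq_fintype_card]; omega)
    have hpu : p ≠ u := fun h => hp (Or.inl h)
    have hpv : p ≠ v := fun h => hp (Or.inr h)
    refine ⟨{u, v}, ⟨p, by rw [hhull u v huv]; trivial, ?_⟩, hcard⟩
    rintro a (rfl | rfl) hmem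
    · have := cycleHull_mono G (T := {v}) (by simp) hmem
      rw [cycleHull_singleton] at this
      exact hpv this
    · have := cycleHull_mono G (T := {u}) (by rintro x ⟨rfl | hx, hne⟩ <;> simp_all) hmem
      rw [cycleHull_singleton] at this
      exact hpu this
  · rintro n ⟨S, hS, rfl⟩
    by_cases hind : G.IsIndepSet S
    · have := Set.ncard_le_one_iff_subsingleton.mpr (hS.subsingleton_of_isIndepSet hind)
      omega
    · obtain ⟨u, hu, v, hv, huv⟩ : ∃ u ∈ S, ∃ v ∈ S, G.Adj u v := by
        by_contra! h
        exact hind fun x hx y hy _ => h x hx y hy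
      by_contra! hlt
      obtain ⟨a, haS, ha⟩ := Set.exists_mem_notMem_of_ncard_lt_ncard
        (s := ({u, v} : Set V)) (t := S) (by rwa [Set.ncard_pair huv.ne])
      obtain ⟨p, -, hp⟩ := hS
      refine hp a haS (cycleHull_mono G (S := {u, v}) ?_ (by rw [hhull u v huv]; trivial))
      rintro x (rfl | rfl)
      · exact ⟨hu, fun h => ha (Or.inl h.symm)⟩
      · exact ⟨hv, fun h => ha (Or.inr h.symm)⟩
end

section
/- Let G be a finite simple P4-sparse graph. Then car(G) ≤ 3. -/
open SimpleGraph

/-- The four-element set `t` induces a path on four vertices in `G`. -/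
def InducesP4 {V : Type*} [DecidableEq V] (G : SimpleGraph V) (t : Finset V) : Prop :=
  ∃ a b c d : V, ({a, b, c, d} : Finset V) = t ∧
    a ≠ b ∧ a ≠ c ∧ a ≠ d ∧ b ≠ c ∧ b ≠ d ∧ c ≠ d ∧
    G.Adj a b ∧ G.Adj b c ∧ G.Adj c d ∧ ¬ G.Adj a c ∧ ¬ G.Adj a d ∧ ¬ G.Adj b d

/-- `G` is P4-sparse: no set of five vertices contains more than one four-element
subset inducing a P4. -/
def P4Sparse {V : Type*} [DecidableEq V] (G : SimpleGraph V) : Prop :=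
  ∀ s : Finset V, s.card = 5 →
    ∀ t₁ t₂ : Finset V, t₁ ⊆ s → t₂ ⊆ s →
      InducesP4 G t₁ → InducesP4 G t₂ → t₁ = t₂

namespace CycleConvexity

variable {V : Type*} {G : SimpleGraph V}

/-- `x` and `y` are joined by a walk of `G` all of whose vertices lie in `S`. -/
def Linked (G : SimpleGraph V) (S : Set V) (x y : V) : Prop :=
  ∃ q : G.Walk x y, ∀ v ∈ q.support, v ∈ S

theorem Linked.refl {S : Set V} {x : V} (hx : x ∈ S) : Linked G S x x :=
  ⟨.nil, by simpa using hx⟩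

theorem Linked.symm {S : Set V} {x y : V} (h : Linked G S x y) : Linked G S y x := by
  obtain ⟨q, hq⟩ := h
  exact ⟨q.reverse, by simpa using hq⟩

theorem Linked.trans {S : Set V} {x y z : V} (h : Linked G S x y) (h' : Linked G S y z) :
    Linked G S x z := by
  obtain ⟨q, hq⟩ := h
  obtain ⟨r, hr⟩ := h'
  refine ⟨q.append r, fun v hv => ?_⟩
  rw [Walk.mem_support_append_iff] at hv
  exact hv.elim (hq v) (hr v)

theorem Linked.of_adj {S : Set V} {x y : V} (h : G.Adj x y) (hx : x ∈ S) (hy : y ∈ S) :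
    Linked G S x y :=
  ⟨.cons h .nil, by simp [hx, hy]⟩

theorem Linked.mono {S T : Set V} {x y : V} (hST : S ⊆ T) (h : Linked G S x y) :
    Linked G T x y := by
  obtain ⟨q, hq⟩ := h
  exact ⟨q, fun v hv => hST (hq v hv)⟩

theorem Linked.left_mem {S : Set V} {x y : V} (h : Linked G S x y) : x ∈ S := by
  obtain ⟨q, hq⟩ := h
  exact hq _ q.start_mem_support

/-- A property passing along the edges inside `S` passes along links. -/
theorem Linked.induct {S : Set V} {x y : V} (h : Linked G S x y) {P : V → Prop} (hx : P x)
    (step : ∀ a ∈ S, ∀ b ∈ S, G.Adj a b → P a → P b) : P y := by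
  obtain ⟨q, hq⟩ := h
  induction q with
  | nil => exact hx
  | cons hadj r ih =>
    simp only [Walk.support_cons, List.mem_cons, forall_eq_or_imp] at hq
    exact ih (step _ hq.1 _ (hq.2 _ r.start_mem_support) hadj hx) hq.2

theorem linked_of_cycle {S : Set V} {w : V}
    (c : (G.induce (S ∪ {w})).Walk ⟨w, Set.mem_union_right S rfl⟩
      ⟨w, Set.mem_union_right S rfl⟩) (hc : c.IsCycle) :
    ∃ x y, x ≠ y ∧ G.Adj w x ∧ G.Adj w y ∧ Linked G S x y := by
  cases c with
  | nil => simp at hc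
  | @cons _ x _ hwx p =>
    rw [Walk.cons_isCycle_iff] at hc
    obtain ⟨hp, he⟩ := hc
    rw [← Walk.isPath_reverse_iff] at hp
    rw [← List.mem_reverse, ← Walk.edges_reverse] at he
    generalize p.reverse = r at hp he
    cases r with
    | nil => simp at hwx
    | @cons _ y _ hwy q =>
      rw [Walk.cons_isPath_iff] at hp
      refine ⟨x, y, ?_, hwx, hwy, Linked.symm ⟨q.map (Embedding.induce _).toHom, ?_⟩⟩
      · intro hxy
        have : x = y := Subtype.ext hxy
        subst this
        simp at he
      · intro v hv
        obtain ⟨u, hu, rfl⟩ := List.mem_map.1 ((congrArg (v ∈ ·) (Walk.support_map _ q)).mp hv)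
        rcases u.2 with h | h
        · exact h
        · obtain rfl : u = ⟨w, Set.mem_union_right S rfl⟩ := Subtype.ext (Set.mem_singleton_iff.1 h)
          exact absurd hu hp.2

theorem exists_cycle_of_linked {S : Set V} {w x y : V} (hw : w ∉ S) (hxy : x ≠ y)
    (hwx : G.Adj w x) (hwy : G.Adj w y) (h : Linked G S x y) :
    ∃ c : (G.induce (S ∪ {w})).Walk ⟨w, Set.mem_union_right S rfl⟩
      ⟨w, Set.mem_union_right S rfl⟩, c.IsCycle := by
  classical
  obtain ⟨q, hq⟩ := h
  have hq' : ∀ v ∈ q.bypass.support, v ∈ S := fun v hv => hq v (q.support_bypass_subset_support hv)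
  have hqp := q.bypass_isPath
  generalize q.bypass = r at hq' hqp
  have hr : ∀ v ∈ r.support, v ∈ S ∪ {w} := fun v hv => Or.inl (hq' v hv)
  have hy : y ∈ S := hq' _ r.end_mem_support
  have hwr : (⟨w, Set.mem_union_right S rfl⟩ : ↥(S ∪ {w})) ∉ (r.induce _ hr).support := by
    intro hmem
    rw [Walk.support_induce] at hmem
    simp at hmem
    exact hw (hq' _ hmem)
  have hyw : (G.induce (S ∪ {w})).Adj ⟨y, Or.inl hy⟩ ⟨w, Set.mem_union_right S rfl⟩ := hwy.symm
  have hwx' : (G.induce (S ∪ {w})).Adj ⟨w, Set.mem_union_right S rfl⟩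
    ⟨x, hr _ r.start_mem_support⟩ := hwx
  refine ⟨.cons hwx' ((r.induce _ hr).concat hyw), ?_⟩
  rw [Walk.cons_isCycle_iff]
  constructor
  · refine Walk.IsPath.concat (.of_map (f := (Embedding.induce _).toHom) ?_) hwr hyw
    rwa [Walk.map_induce]
  · rw [Walk.edges_concat]
    simp only [List.concat_eq_append, List.mem_append, List.mem_singleton, not_or]
    refine ⟨fun hmem => hwr (Walk.fst_mem_support_of_mem_edges _ hmem), fun heq => ?_⟩
    simp [Subtype.ext_iff, hxy] at heq
    exact hw (heq.1 ▸ hy)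

theorem isCycleConvex_iff {S : Set V} :
    IsCycleConvex G S ↔ ∀ w, w ∉ S → ∀ x y, x ≠ y → G.Adj w x → G.Adj w y →
      ¬ Linked G S x y := by
  constructor
  · intro h w hw x y hxy hwx hwy hl
    exact h w hw (exists_cycle_of_linked hw hxy hwx hwy hl)
  · rintro h w hw ⟨c, hc⟩
    obtain ⟨x, y, hxy, hwx, hwy, hl⟩ := linked_of_cycle c hc
    exact h w hw x y hxy hwx hwy hl

theorem mem_of_linked {S : Set V} (hS : IsCycleConvex G S) {w x y : V} (hxy : x ≠ y)
    (hwx : G.Adj w x) (hwy : G.Adj w y) (h : Linked G S x y) : w ∈ S := by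
  by_contra hw
  exact isCycleConvex_iff.1 hS w hw x y hxy hwx hwy h

theorem mem_of_triangle {S : Set V} (hS : IsCycleConvex G S) {w x y : V} (hx : x ∈ S)
    (hy : y ∈ S) (hxy : G.Adj x y) (hwx : G.Adj w x) (hwy : G.Adj w y) : w ∈ S :=
  mem_of_linked hS hxy.ne hwx hwy (Linked.of_adj hxy hx hy)

theorem subset_cycleHull (S : Set V) : S ⊆ cycleHull G S :=
  Set.subset_sInter fun _ hT => hT.1

theorem cycleHull_subset {S T : Set V} (hST : S ⊆ T) (hT : IsCycleConvex G T) :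
    cycleHull G S ⊆ T :=
  Set.sInter_subset_of_mem ⟨hST, hT⟩

theorem isCycleConvex_cycleHull (S : Set V) : IsCycleConvex G (cycleHull G S) := by
  rw [isCycleConvex_iff]
  intro w hw x y hxy hwx hwy hl
  refine hw fun T hT => mem_of_linked hT.2 hxy hwx hwy (hl.mono (cycleHull_subset hT.1 hT.2))

theorem cycleHull_mono {S T : Set V} (hST : S ⊆ T) : cycleHull G S ⊆ cycleHull G T :=
  cycleHull_subset (hST.trans (subset_cycleHull T)) (isCycleConvex_cycleHull T)

/-- `S` induces a connected (possibly empty) subgraph. -/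
def IsLinked (G : SimpleGraph V) (S : Set V) : Prop :=
  ∀ x ∈ S, ∀ y ∈ S, Linked G S x y

theorem isLinked_cycleHull {T : Set V} {t : V} (ht : ∀ x ∈ T, Linked G (cycleHull G T) t x) :
    IsLinked G (cycleHull G T) := by
  have key : cycleHull G T ⊆ {v | Linked G (cycleHull G T) t v} := by
    refine cycleHull_subset ht ?_
    rw [isCycleConvex_iff]
    intro w hw x y hxy hwx hwy hl
    have hsub : {v | Linked G (cycleHull G T) t v} ⊆ cycleHull G T :=
      fun v hv => hv.symm.left_mem
    have hwH := mem_of_linked (isCycleConvex_cycleHull T) hxy hwx hwy (hl.mono hsub)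
    have hx : Linked G (cycleHull G T) t x := hl.left_mem
    exact hw (hx.trans (Linked.of_adj hwx.symm hx.symm.left_mem hwH))
  exact fun x hx y hy => (key hx).symm.trans (key hy)

/-- A linked convex set contains at most one neighbour of each outside vertex. -/
theorem eq_of_adj {H : Set V} (hH : IsCycleConvex G H) (hl : IsLinked G H) {w x y : V}
    (hw : w ∉ H) (hx : x ∈ H) (hy : y ∈ H) (hwx : G.Adj w x) (hwy : G.Adj w y) : x = y := by
  by_contra hxy
  exact hw (mem_of_linked hH hxy hwx hwy (hl x hx y hy))

theorem exists_adj_of_isLinked {H A : Set V} (hl : IsLinked G H) {a b : V} (ha : a ∈ H)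
    (hb : b ∈ H) (haA : a ∈ A) (hbA : b ∉ A) :
    ∃ c ∈ A, c ∈ H ∧ ∃ d ∈ H, d ∉ A ∧ G.Adj c d := by
  by_contra hcon
  push Not at hcon
  refine hbA ((hl a ha b hb).induct (P := (· ∈ A)) haA ?_)
  intro c hc d hd hadj hcA
  by_contra hdA
  exact hcon c hcA hc d hd hdA hadj

theorem exists_ne_of_three {H : Set V} {x y z : V} (hx : x ∈ H) (hy : y ∈ H) (hz : z ∈ H)
    (hxy : x ≠ y) (hxz : x ≠ z) (hyz : y ≠ z) (a b : V) : ∃ c ∈ H, c ≠ a ∧ c ≠ b := by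
  by_contra! hcon
  have hx' := hcon x hx
  have hy' := hcon y hy
  have hz' := hcon z hz
  clear hcon hx hy hz
  by_cases x = a <;> by_cases y = a <;> by_cases z = a <;> simp_all

/-- `a b c d` is an induced path of `G`. -/
def IsP4 (G : SimpleGraph V) (a b c d : V) : Prop :=
  G.Adj a b ∧ G.Adj b c ∧ G.Adj c d ∧ ¬ G.Adj a c ∧ ¬ G.Adj a d ∧ ¬ G.Adj b d

theorem IsP4.ne {a b c d : V} (h : IsP4 G a b c d) :
    a ≠ b ∧ a ≠ c ∧ a ≠ d ∧ b ≠ c ∧ b ≠ d ∧ c ≠ d := by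
  obtain ⟨hab, hbc, hcd, hac, had, hbd⟩ := h
  refine ⟨hab.ne, ?_, ?_, hbc.ne, ?_, hcd.ne⟩
  · rintro rfl; exact had hcd
  · rintro rfl; exact hac hcd.symm
  · rintro rfl; exact had hab

variable [DecidableEq V]

theorem IsP4.inducesP4 {a b c d : V} (h : IsP4 G a b c d) : InducesP4 G {a, b, c, d} := by
  obtain ⟨h1, h2, h3, h4, h5, h6⟩ := h.ne
  exact ⟨a, b, c, d, rfl, h1, h2, h3, h4, h5, h6, h⟩

/-- In a `P4`-sparse graph, no induced path meets another one in all but one vertex. -/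
theorem not_isP4_of_isP4 (hG : P4Sparse G) {a b c d : V} (h : IsP4 G a b c d) (e : V)
    {a' b' c' d' : V} (h' : IsP4 G a' b' c' d') (hne : e ≠ a ∧ e ≠ b ∧ e ≠ c ∧ e ≠ d)
    (he : e ∈ ({a', b', c', d'} : Finset V))
    (hsub : ({a', b', c', d'} : Finset V) ⊆ {e, a, b, c, d}) : False := by
  have hcard : ({e, a, b, c, d} : Finset V).card = 5 := by
    obtain ⟨h1, h2, h3, h4, h5, h6⟩ := h.ne
    obtain ⟨h7, h8, h9, h10⟩ := hne
    simp [*]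
  have heq := hG _ hcard _ _ (Finset.subset_insert _ _) hsub h.inducesP4 h'.inducesP4
  rw [← heq] at he
  simp [hne] at he

/-- A vertex with two linked neighbours lies on a triangle or an induced four-cycle. -/
theorem triangle_or_square (hG : P4Sparse G) {S : Set V} {w : V} (hw : w ∉ S) :
    ∀ (n : ℕ) (x y : V) (q : G.Walk x y), q.length = n → (∀ v ∈ q.support, v ∈ S) → x ≠ y →
      G.Adj w x → G.Adj w y →
      (∃ a ∈ S, ∃ b ∈ S, G.Adj a b ∧ G.Adj w a ∧ G.Adj w b) ∨
      (∃ a ∈ S, ∃ z ∈ S, ∃ b ∈ S, a ≠ b ∧ G.Adj a z ∧ G.Adj z b ∧ G.Adj w a ∧ G.Adj w b ∧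
        ¬ G.Adj a b ∧ ¬ G.Adj w z) := by
  intro n
  induction n using Nat.strong_induction_on with
  | _ n ih =>
  intro x y q hn hq hxy hwx hwy
  cases q with
  | nil => exact absurd rfl hxy
  | @cons _ a _ hxa q =>
  cases q with
  | nil =>
    simp at hq
    exact Or.inl ⟨x, hq.1, y, hq.2, hxa, hwx, hwy⟩
  | @cons _ b _ hab q =>
  by_cases hwa : G.Adj w a
  · simp at hq
    exact Or.inl ⟨x, hq.1, a, hq.2.1, hxa, hwx, hwa⟩
  cases q with
  | nil =>
    simp at hq
    by_cases hxy' : G.Adj x y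
    · exact Or.inl ⟨x, hq.1, y, hq.2.2, hxy', hwx, hwy⟩
    · exact Or.inr ⟨x, hq.1, a, hq.2.1, y, hq.2.2, hxy, hxa, hab, hwx, hwy, hxy', hwa⟩
  | @cons _ c _ hbc r =>
  simp only [Walk.support_cons, List.mem_cons, forall_eq_or_imp] at hq
  simp only [Walk.length_cons] at hn
  obtain ⟨hxS, haS, hbS, hr⟩ := hq
  have hcS : c ∈ S := hr c r.start_mem_support
  by_cases hbx : x = b
  · subst hbx
    exact ih _ (by simp; omega) x y (.cons hbc r) rfl (by simpa [hxS] using hr) hxy hwx hwy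
  by_cases hwb : G.Adj w b
  · exact ih 2 (by omega) x b (.cons hxa (.cons hab .nil)) rfl (by simp [*]) hbx hwx hwb
  by_cases hxb : G.Adj x b
  · exact ih _ (by simp; omega) x y (.cons hxb (.cons hbc r)) rfl
      (by simpa [hxS, hbS] using hr) hxy hwx hwy
  by_cases hac : G.Adj a c
  · exact ih _ (by simp; omega) x y (.cons hxa (.cons hac r)) rfl
      (by simpa [hxS, haS] using hr) hxy hwx hwy
  by_cases hxc : G.Adj x c
  · exact ih _ (by simp; omega) x y (.cons hxc r) rfl (by simpa [hxS] using hr) hxy hwx hwy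
  by_cases hcx : c = x
  · subst hcx
    exact ih _ (by omega) c y r rfl hr hxy hwx hwy
  by_cases hca : c = a
  · subst hca
    exact ih _ (by simp; omega) x y (.cons hxa r) rfl (by simpa [hxS] using hr) hxy hwx hwy
  exfalso
  have hwc : c ≠ w := by rintro rfl; exact hw hcS
  refine not_isP4_of_isP4 hG (a := w) (b := x) (c := a) (d := b) ⟨hwx, hxa, hab, hwa, hwb, hxb⟩
    c (a' := x) (b' := a) (c' := b) (d' := c) ⟨hxa, hab, hbc, hxb, hxc, hac⟩
    ⟨hwc, hcx, hca, hbc.ne'⟩ (by simp) (by intro; simp; tauto)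

theorem adj_of_triple_of_adj (hG : P4Sparse G) {H : Set V} (hH : IsCycleConvex G H)
    (hl : IsLinked G H) {h m k w u : V} (hh : h ∈ H) (hm : m ∈ H) (hk : k ∈ H) (hmh : G.Adj m h)
    (hkh : k ≠ h) (hkm : k ≠ m) (hk' : G.Adj k h ∨ G.Adj k m) (hw : w ∉ H) (hwh : G.Adj w h)
    (hu : u ∉ H) (huw : G.Adj u w) (hum : G.Adj u m) : G.Adj u h := by
  by_contra huh
  have hwm : ¬ G.Adj w m := fun h1 => hmh.ne (eq_of_adj hH hl hw hm hh h1 hwh)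
  have hwk : ¬ G.Adj w k := fun h1 => hkh (eq_of_adj hH hl hw hk hh h1 hwh)
  have huk : ¬ G.Adj u k := fun h1 => hkm (eq_of_adj hH hl hu hk hm h1 hum)
  have hne : ∀ a ∈ H, a ≠ w ∧ a ≠ u := fun a ha =>
    ⟨by rintro rfl; exact hw ha, by rintro rfl; exact hu ha⟩
  have := hne h hh
  have := hne m hm
  have := hne k hk
  have := huw.ne
  have := hmh.ne
  by_cases h1 : G.Adj k h
  · by_cases h2 : G.Adj k m
    · refine not_isP4_of_isP4 hG (a := k) (b := h) (c := w) (d := u) ?_ m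
        (a' := k) (b' := m) (c' := u) (d' := w) ?_ ?_ ?_ ?_
      · simp_all [IsP4, G.adj_comm]
      · simp_all [IsP4, G.adj_comm]
      · grind
      · simp
      · intro; simp; tauto
    · refine not_isP4_of_isP4 hG (a := k) (b := h) (c := m) (d := u) ?_ w
        (a' := k) (b' := h) (c' := w) (d' := u) ?_ ?_ ?_ ?_
      · simp_all [IsP4, G.adj_comm]
      · simp_all [IsP4, G.adj_comm]
      · grind
      · simp
      · intro; simp; tauto
  · refine not_isP4_of_isP4 hG (a := k) (b := m) (c := h) (d := w) ?_ u
      (a' := k) (b' := m) (c' := u) (d' := w) ?_ ?_ ?_ ?_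
    · simp_all [IsP4, G.adj_comm]
    · simp_all [IsP4, G.adj_comm]
    · grind
    · simp
    · intro; simp; tauto

/-- The part of `G` hanging off a vertex `h` of a linked convex set with at least three
vertices is complete to `h`. -/
theorem adj_of_adj_of_adj (hG : P4Sparse G) {H : Set V} (hH : IsCycleConvex G H)
    (hl : IsLinked G H) (h3 : ∀ a b, ∃ c ∈ H, c ≠ a ∧ c ≠ b) {h w u : V} (hh : h ∈ H)
    (hw : w ∉ H) (hwh : G.Adj w h) (hu : u ∉ H) (huw : G.Adj u w) : G.Adj u h := by
  by_contra huh
  obtain ⟨b, hb, hbh, -⟩ := h3 h h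
  obtain ⟨c, hc, -, m, hm, hmh, hadj⟩ := exists_adj_of_isLinked (A := {h}) hl hh hb rfl hbh
  obtain rfl : c = h := hc
  obtain ⟨d, hd, hdc, hdm⟩ := h3 c m
  obtain ⟨e, he, -, k, hk, hke, hek⟩ := exists_adj_of_isLinked (A := {c, m}) hl hh hd
    (by simp) (by simp [hdc, hdm])
  simp only [Set.mem_insert_iff, Set.mem_singleton_iff, not_or] at he hke
  have hk' : G.Adj k c ∨ G.Adj k m := by
    rcases he with rfl | rfl
    · exact Or.inl hek.symm
    · exact Or.inr hek.symm
  have hum : ¬ G.Adj u m := fun h1 =>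
    huh (adj_of_triple_of_adj hG hH hl hh hm hk hadj.symm hke.1 hke.2 hk' hw hwh hu huw h1)
  have hwm : ¬ G.Adj w m := fun h1 => hmh (eq_of_adj hH hl hw hm hh h1 hwh)
  have hwk : ¬ G.Adj w k := fun h1 => hke.1 (eq_of_adj hH hl hw hk hh h1 hwh)
  have hne : ∀ a ∈ H, a ≠ w ∧ a ≠ u := fun a ha =>
    ⟨by rintro rfl; exact hw ha, by rintro rfl; exact hu ha⟩
  have := hne c hh
  have := hne m hm
  have := hne k hk
  by_cases h1 : G.Adj k c
  · have huk : ¬ G.Adj u k := fun h2 =>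
      huh (adj_of_triple_of_adj hG hH hl hh hk hm h1 hmh (Ne.symm hke.2) (Or.inl hadj.symm)
        hw hwh hu huw h2)
    refine not_isP4_of_isP4 hG (a := u) (b := w) (c := c) (d := m) ?_ k
      (a' := u) (b' := w) (c' := c) (d' := k) ?_ ?_ ?_ ?_
    · simp_all [IsP4, G.adj_comm]
    · simp_all [IsP4, G.adj_comm]
    · grind
    · simp
    · intro; simp; tauto
  · refine not_isP4_of_isP4 hG (a := u) (b := w) (c := c) (d := m) ?_ k
      (a' := w) (b' := c) (c' := m) (d' := k) ?_ ?_ ?_ ?_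
    · simp_all [IsP4, G.adj_comm]
    · simp_all [IsP4, G.adj_comm]
    · grind
    · simp
    · intro; simp; tauto

/-- If an outside vertex is attached to a linked convex set at `h`, then the vertices with two
neighbours in this set lie in the closed neighbourhood of `h`. -/
theorem eq_or_adj_of_two_adj (hG : P4Sparse G) {H : Set V} (hH : IsCycleConvex G H)
    (hl : IsLinked G H) {h w v a b : V} (hh : h ∈ H) (hw : w ∉ H) (hwh : G.Adj w h)
    (hv : v ∈ H) (ha : a ∈ H) (hb : b ∈ H) (hab : a ≠ b) (hva : G.Adj v a) (hvb : G.Adj v b) :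
    v = h ∨ G.Adj v h := by
  have hwn : ∀ c ∈ H, c ≠ h → ¬ G.Adj w c := fun c hc hch h1 =>
    hch (eq_of_adj hH hl hw hc hh h1 hwh)
  have hne : ∀ c ∈ H, c ≠ w := by rintro c hc rfl; exact hw hc
  have hne_h := hne h hh
  -- A vertex of `H` at distance two from `h` has degree one in `H`.
  have key : ∀ m ∈ H, ∀ x ∈ H, ∀ n ∈ H, G.Adj h m → G.Adj m x → x ≠ h → ¬ G.Adj x h →
      G.Adj x n → n ≠ m → False := by
    intro m hm x hx n hn hhm hmx hxh hxh' hxn hnm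
    have := hne m hm
    have := hne x hx
    have := hne n hn
    have hnh : n ≠ h := by rintro rfl; exact hxh' hxn
    have h1 := hwn m hm hhm.ne'
    have h2 := hwn x hx hxh
    have h3 := hwn n hn hnh
    have hp : IsP4 G w h m x := by simp_all [IsP4, G.adj_comm]
    have hnx := hxn.ne
    by_cases h4 : G.Adj n h
    · refine not_isP4_of_isP4 hG hp n (a' := w) (b' := h) (c' := n) (d' := x) ?_ ?_ ?_ ?_
      · simp_all [IsP4, G.adj_comm]
      · grind
      · simp
      · intro; simp; tauto
    · by_cases h5 : G.Adj n m
      · refine not_isP4_of_isP4 hG hp n (a' := w) (b' := h) (c' := m) (d' := n) ?_ ?_ ?_ ?_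
        · simp_all [IsP4, G.adj_comm]
        · grind
        · simp
        · intro; simp; tauto
      · refine not_isP4_of_isP4 hG hp n (a' := h) (b' := m) (c' := x) (d' := n) ?_ ?_ ?_ ?_
        · simp_all [IsP4, G.adj_comm]
        · grind
        · simp
        · intro; simp; tauto
  have dist : v = h ∨ G.Adj v h ∨ ∃ m ∈ H, G.Adj h m ∧ G.Adj m v := by
    refine (hl h hh v hv).induct (P := fun v => v = h ∨ G.Adj v h ∨ ∃ m ∈ H, G.Adj h m ∧ G.Adj m v)
      (Or.inl rfl) ?_
    rintro c hc d hd hcd (rfl | h1 | ⟨m, hm, hhm, hmc⟩)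
    · exact Or.inr (Or.inl hcd.symm)
    · exact Or.inr (Or.inr ⟨c, hc, h1.symm, hcd⟩)
    · by_cases h2 : c = h
      · subst h2
        exact Or.inr (Or.inl hcd.symm)
      by_cases h3 : G.Adj c h
      · exact Or.inr (Or.inr ⟨c, hc, h3.symm, hcd⟩)
      by_cases h4 : d = m
      · subst h4
        exact Or.inr (Or.inl hhm.symm)
      exact (key m hm c hc d hd hhm hmc h2 h3 hcd h4).elim
  by_contra hcon
  push Not at hcon
  rcases dist with h1 | h1 | ⟨m, hm, hhm, hmv⟩
  · exact hcon.1 h1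
  · exact hcon.2 h1
  · by_cases h2 : a = m
    · exact key m hm v hv b hb hhm hmv hcon.1 hcon.2 hvb (h2 ▸ hab.symm)
    · exact key m hm v hv a ha hhm hmv hcon.1 hcon.2 hva h2

/-- Over a linked hull with at least three vertices, one further generator is enough. -/
theorem mem_cycleHull_insert (hG : P4Sparse G) {S T : Set V} {p t : V}
    (hl : IsLinked G (cycleHull G T)) (h3 : ∀ a b, ∃ c ∈ cycleHull G T, c ≠ a ∧ c ≠ b)
    (ht : t ∈ T) (hreach : Linked G Set.univ t p) (hp : p ∈ cycleHull G S) :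
    p ∈ cycleHull G T ∨ ∃ s ∈ S, s ∉ cycleHull G T ∧ (∃ h ∈ cycleHull G T, G.Adj s h) ∧
      p ∈ cycleHull G (insert s T) := by
  set H := cycleHull G T with hHdef
  have hH : IsCycleConvex G H := isCycleConvex_cycleHull T
  have hpK : p ∈ H ∪ {v | ∃ s ∈ S, Linked G Hᶜ s v} := by
    refine cycleHull_subset (fun s hs => ?_) ?_ hp
    · by_cases hsH : s ∈ H
      · exact Or.inl hsH
      · exact Or.inr ⟨s, hs, Linked.refl hsH⟩
    rw [isCycleConvex_iff]
    intro w hw x y hxy hwx hwy hxy'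
    have hwH : w ∉ H := fun h => hw (Or.inl h)
    have side : ∀ z ∈ H ∪ {v | ∃ s ∈ S, Linked G Hᶜ s v}, G.Adj w z → z ∈ H := by
      rintro z (hz | ⟨s, hs, hsz⟩) hwz
      · exact hz
      · exact (hw (Or.inr ⟨s, hs, hsz.trans
          (Linked.of_adj hwz.symm hsz.symm.left_mem hwH)⟩)).elim
    exact hxy (eq_of_adj hH hl hwH (side x hxy'.left_mem hwx) (side y hxy'.symm.left_mem hwy)
      hwx hwy)
  rcases hpK with hpH | ⟨s, hs, hsp⟩
  · exact Or.inl hpH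
  right
  have hpH : p ∉ H := hsp.symm.left_mem
  have hatt : p ∈ H ∨ ∃ h ∈ H, G.Adj p h := by
    refine hreach.induct (P := fun v => v ∈ H ∨ ∃ h ∈ H, G.Adj v h)
      (Or.inl (subset_cycleHull T ht)) ?_
    rintro a - b - hab (ha | ⟨h, hh, hah⟩)
    · exact Or.inr ⟨a, ha, hab.symm⟩
    · by_cases hbH : b ∈ H
      · exact Or.inl hbH
      by_cases haH : a ∈ H
      · exact Or.inr ⟨a, haH, hab.symm⟩
      · exact Or.inr ⟨h, hh, adj_of_adj_of_adj hG hH hl h3 hh haH hah hbH hab.symm⟩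
  obtain ⟨h, hh, hph⟩ := hatt.resolve_left hpH
  have step : ∀ a ∈ Hᶜ, ∀ b ∈ Hᶜ, G.Adj a b → G.Adj a h → G.Adj b h := fun a ha b hb hab hah =>
    adj_of_adj_of_adj hG hH hl h3 hh ha hah hb hab.symm
  have hsh : G.Adj s h := hsp.symm.induct (P := fun v => G.Adj v h) hph step
  refine ⟨s, hs, hsp.left_mem, ⟨h, hh, hsh⟩, ?_⟩
  have hhull := isCycleConvex_cycleHull (G := G) (insert s T)
  have hh' : h ∈ cycleHull G (insert s T) := cycleHull_mono (Set.subset_insert s T) hh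
  refine (hsp.induct (P := fun v => G.Adj v h ∧ v ∈ cycleHull G (insert s T))
    ⟨hsh, subset_cycleHull _ (Set.mem_insert s T)⟩ ?_).2
  rintro a ha b hb hab ⟨hah, haI⟩
  have hbh := step a ha b hb hab hah
  exact ⟨hbh, mem_of_triangle hhull haI hh' hah hab.symm hbh⟩

/-- Generators outside the connected component of `p` are irrelevant for `p`. -/
theorem linked_univ_of_indep {S : Set V} {p s : V} (hp : p ∈ cycleHull G S)
    (hind : ∀ a ∈ S, p ∉ cycleHull G (S \ {a})) (hs : s ∈ S) : Linked G Set.univ s p := by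
  by_contra hsp
  have hpK : p ∈ cycleHull G (S \ {s}) ∪ {v | ¬ Linked G Set.univ v p} := by
    refine cycleHull_subset (fun a ha => ?_) ?_ hp
    · by_cases has : a = s
      · exact Or.inr (has ▸ hsp)
      · exact Or.inl (subset_cycleHull _ ⟨ha, has⟩)
    rw [isCycleConvex_iff]
    intro w hw x y hxy hwx hwy hl
    simp only [Set.mem_union, Set.mem_ofPred_eq, not_or, not_not] at hw
    have hxp : Linked G Set.univ x p :=
      (Linked.of_adj hwx.symm (Set.mem_univ _) (Set.mem_univ _)).trans hw.2
    have hl' : Linked G (cycleHull G (S \ {s})) x y := by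
      obtain ⟨q, hq⟩ := hl
      refine ⟨q, fun v hv => (hq v hv).resolve_right fun hvp => hvp ?_⟩
      exact Linked.trans ⟨(q.takeUntil v hv).reverse, by simp⟩ hxp
    exact hw.1 (mem_of_linked (isCycleConvex_cycleHull _) hxy hwx hwy hl')
  rcases hpK with h | h
  · exact hind s hs h
  · exact h (Linked.refl (Set.mem_univ p))

theorem ncard_le_three_of_indep [Finite V] (hG : P4Sparse G) {S : Set V} (hS : CIndep G S) :
    S.ncard ≤ 3 := by
  obtain ⟨p, hp, hind⟩ := hS
  by_contra! hcard
  have hreach : ∀ s ∈ S, Linked G Set.univ s p := fun s hs => linked_univ_of_indep hp hind hs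
  have hsmall : ∀ x ∈ S, ∀ y ∈ S, ∀ z ∈ S, p ∉ cycleHull G {x, y, z} := by
    intro x hx y hy z hz hmem
    have hle : ({x, y, z} : Set V).ncard ≤ 3 := by
      have := Finset.card_le_three (a := x) (b := y) (c := z)
      rw [← Set.ncard_coe_finset] at this
      simpa using this
    obtain ⟨a, haS, ha⟩ := Set.exists_mem_notMem_of_ncard_lt_ncard (hle.trans_lt hcard)
    have hsub : ({x, y, z} : Set V) ⊆ S := by simp [Set.insert_subset_iff, hx, hy, hz]
    refine hind a haS (cycleHull_mono (Set.subset_sdiff_singleton hsub ha) hmem)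
  have htriangle : ∀ x ∈ S, ∀ y ∈ S, ∀ w, G.Adj x y → G.Adj w x → G.Adj w y → False := by
    intro x hx y hy w hxy hwx hwy
    have hxH : x ∈ cycleHull G {x, y} := subset_cycleHull _ (by simp)
    have hyH : y ∈ cycleHull G {x, y} := subset_cycleHull _ (by simp)
    have hwH := mem_of_triangle (isCycleConvex_cycleHull _) hxH hyH hxy hwx hwy
    have hl : IsLinked G (cycleHull G {x, y}) := by
      refine isLinked_cycleHull (t := x) ?_
      rintro z (rfl | rfl)
      · exact Linked.refl hxH
      · exact Linked.of_adj hxy hxH hyH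
    have h3 : ∀ a b, ∃ c ∈ cycleHull G {x, y}, c ≠ a ∧ c ≠ b := by
      exact exists_ne_of_three hxH hyH hwH hxy.ne hwx.ne' hwy.ne'
    rcases mem_cycleHull_insert hG hl h3 (by simp) (hreach x hx) hp with h | ⟨s, hs, -, -, h⟩
    · exact hsmall x hx x hx y hy (by simpa using h)
    · exact hsmall s hs x hx y hy h
  have hpS : p ∉ S := fun hpS => hsmall p hpS p hpS p hpS (subset_cycleHull _ (by simp))
  have hnc : ¬ IsCycleConvex G S := fun h => hpS (cycleHull_subset subset_rfl h hp)
  rw [isCycleConvex_iff] at hnc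
  push Not at hnc
  obtain ⟨w, hw, x, y, hxy, hwx, hwy, q, hq⟩ := hnc
  rcases triangle_or_square hG hw _ x y q rfl hq hxy hwx hwy with
    ⟨a, ha, b, hb, hab, hwa, hwb⟩ |
    ⟨a, ha, z, hz, b, hb, hab, haz, hzb, hwa, hwb, hab', hwz⟩
  · exact htriangle a ha b hb w hab hwa hwb
  have haH : a ∈ cycleHull G {a, z, b} := subset_cycleHull _ (by simp)
  have hzH : z ∈ cycleHull G {a, z, b} := subset_cycleHull _ (by simp)
  have hbH : b ∈ cycleHull G {a, z, b} := subset_cycleHull _ (by simp)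
  have hab_l := (Linked.of_adj haz haH hzH).trans (Linked.of_adj hzb hzH hbH)
  have hwH := mem_of_linked (isCycleConvex_cycleHull _) hab hwa hwb hab_l
  have hl : IsLinked G (cycleHull G {a, z, b}) := by
    refine isLinked_cycleHull (t := a) ?_
    rintro c (rfl | rfl | rfl)
    · exact Linked.refl haH
    · exact Linked.of_adj haz haH hzH
    · exact hab_l
  have h3 : ∀ c d, ∃ e ∈ cycleHull G {a, z, b}, e ≠ c ∧ e ≠ d := by
    exact exists_ne_of_three haH hzH hbH haz.ne hab hzb.ne
  rcases mem_cycleHull_insert hG hl h3 (by simp) (hreach a ha) hp with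
    h | ⟨s, hs, hsH, ⟨h, hh, hsh⟩, -⟩
  · exact hsmall a ha z hz b hb h
  have hzw : z ≠ w := by rintro rfl; exact hw hz
  have hnear := fun {v c d : V} => eq_or_adj_of_two_adj (v := v) (a := c) (b := d) hG
    (isCycleConvex_cycleHull _) hl hh hsH hsh
  have h1 := hnear haH hzH hwH hzw haz hwa.symm
  have h2 := hnear hbH hzH hwH hzw hzb.symm hwb.symm
  have h3 := hnear hzH haH hbH hab haz.symm hzb
  have h4 := hnear hwH haH hbH hab hwa hwb
  have hah : G.Adj h a := by
    rcases h1 with rfl | h1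
    · rcases h2 with h2 | h2
      · exact (hab h2.symm).elim
      · exact (hab' h2.symm).elim
    · exact h1.symm
  have hzh : G.Adj h z := by
    rcases h3 with rfl | h3
    · rcases h4 with h4 | h4
      · exact (hzw h4.symm).elim
      · exact (hwz h4).elim
    · exact h3.symm
  exact htriangle a ha z hz h haz hah hzh

end CycleConvexity

/-- A finite P4-sparse graph has Caratheodory number at most 3. -/
theorem stmt_11 {V : Type*} [Fintype V] [DecidableEq V] (G : SimpleGraph V)
    (hG : P4Sparse G) :
    carNumber G ≤ 3 := by
  refine csSup_le' ?_
  rintro n ⟨S, hS, rfl⟩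
  exact CycleConvexity.ncard_le_three_of_indep hG hS
end

section
/- Let G and H be finite simple connected graphs, each with at least two vertices, and let S ⊆ V(G □ H). If P is a path in the subgraph of G □ H induced by S, then π_G(V(P)) × π_H(V(P)) ⊆ hull(S), where hull denotes the cycle convex hull in G □ H. -/
open SimpleGraph

/-- A cycle convex set containing three vertices of a 4-cycle contains the fourth. -/
lemma IsCycleConvex.mem_of_four_cycle {V : Type*} {G : SimpleGraph V} {T : Set V}
    (hT : IsCycleConvex G T) {a b c w : V} (ha : a ∈ T) (hb : b ∈ T) (hc : c ∈ T)
    (hwa : G.Adj w a) (hab : G.Adj a b) (hbc : G.Adj b c) (hcw : G.Adj c w) (hac : a ≠ c) :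
    w ∈ T := by
  by_contra hw
  have hwb : w ≠ b := fun h => hw (h ▸ hb)
  let w' : ↥(T ∪ {w}) := ⟨w, Set.mem_union_right T rfl⟩
  let a' : ↥(T ∪ {w}) := ⟨a, Or.inl ha⟩
  let b' : ↥(T ∪ {w}) := ⟨b, Or.inl hb⟩
  let c' : ↥(T ∪ {w}) := ⟨c, Or.inl hc⟩
  have h1 : (G.induce (T ∪ {w})).Adj w' a' := hwa
  have h2 : (G.induce (T ∪ {w})).Adj a' b' := hab
  have h3 : (G.induce (T ∪ {w})).Adj b' c' := hbc
  have h4 : (G.induce (T ∪ {w})).Adj c' w' := hcw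
  refine hT w hw ⟨.cons h1 (.cons h2 (.cons h3 (.cons h4 .nil))), ?_⟩
  have := hwa.ne
  have := hab.ne
  have := hbc.ne
  have := hcw.ne
  rw [Walk.cons_isCycle_iff]
  constructor
  · simp [Walk.isPath_def, a', b', c', w']
    grind
  · simp [a', b', c', w']
    grind

/-- If the fibre over `x'` covers the second projection of a walk, then so does the fibre over a
neighbour `x`, provided it meets the start of the walk. -/
lemma IsCycleConvex.fst_fibre_of_walk {α β : Type*} {G : SimpleGraph α} {H : SimpleGraph β}
    {T : Set (α × β)} (hT : IsCycleConvex (G □ H) T) {x x' : α} (hx : G.Adj x x')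
    {c d : α × β} (q : (G □ H).Walk c d) (hc : (x, c.2) ∈ T)
    (hq : ∀ v ∈ q.support, (x', v.2) ∈ T) : ∀ v ∈ q.support, (x, v.2) ∈ T := by
  induction q with
  | nil => simpa using hc
  | @cons u v w h q ih =>
    simp only [Walk.support_cons, List.mem_cons, forall_eq_or_imp] at hq ⊢
    refine ⟨hc, ih ?_ hq.2⟩
    rcases boxProd_adj.1 h with ⟨-, h⟩ | ⟨h, -⟩
    · rwa [← h]
    · refine hT.mem_of_four_cycle hc hq.1 (hq.2 v q.start_mem_support) ?_ ?_ ?_ ?_ ?_ <;>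
        simp [h, h.symm, hx, hx.symm, hx.ne]

/-- If the fibre over `y'` covers the first projection of a walk, then so does the fibre over a
neighbour `y`, provided it meets the start of the walk. -/
lemma IsCycleConvex.snd_fibre_of_walk {α β : Type*} {G : SimpleGraph α} {H : SimpleGraph β}
    {T : Set (α × β)} (hT : IsCycleConvex (G □ H) T) {y y' : β} (hy : H.Adj y y')
    {c d : α × β} (q : (G □ H).Walk c d) (hc : (c.1, y) ∈ T)
    (hq : ∀ v ∈ q.support, (v.1, y') ∈ T) : ∀ v ∈ q.support, (v.1, y) ∈ T := by
  induction q with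
  | nil => simpa using hc
  | @cons u v w h q ih =>
    simp only [Walk.support_cons, List.mem_cons, forall_eq_or_imp] at hq ⊢
    refine ⟨hc, ih ?_ hq.2⟩
    rcases boxProd_adj.1 h with ⟨h, -⟩ | ⟨-, h⟩
    · refine hT.mem_of_four_cycle hc hq.1 (hq.2 v q.start_mem_support) ?_ ?_ ?_ ?_ ?_ <;>
        simp [h, h.symm, hy, hy.symm, hy.ne]
    · rwa [← h]

/-- A cycle convex set of `G □ H` containing a walk contains the product of its projections. -/
lemma IsCycleConvex.mem_of_walk {α β : Type*} {G : SimpleGraph α} {H : SimpleGraph β}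
    {T : Set (α × β)} (hT : IsCycleConvex (G □ H) T) {a b : α × β} (p : (G □ H).Walk a b)
    (hp : ∀ v ∈ p.support, v ∈ T) :
    ∀ u ∈ p.support, ∀ v ∈ p.support, (u.1, v.2) ∈ T := by
  induction p with
  | nil => simpa using hp
  | @cons a c b h q ih =>
    simp only [Walk.support_cons, List.mem_cons, forall_eq_or_imp] at hp ⊢
    obtain ⟨ha, hq⟩ := hp
    have ih := ih hq
    have hc := q.start_mem_support
    rcases boxProd_adj.1 h with ⟨h, e⟩ | ⟨h, e⟩
    · exact ⟨⟨ha, hT.fst_fibre_of_walk h q (e ▸ ha) (ih c hc)⟩,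
        fun u hu => ⟨e ▸ ih u hu c hc, ih u hu⟩⟩
    · have key := hT.snd_fibre_of_walk h q (e ▸ ha) fun u hu => ih u hu c hc
      exact ⟨⟨ha, fun v hv => e ▸ ih c hc v hv⟩, fun u hu => ⟨key u hu, ih u hu⟩⟩

/-- If P is a path in the subgraph of G □ H induced by S, then the product of the
projections of its vertex set is contained in the cycle convex hull of S. -/
theorem stmt_16 {α β : Type*} [Fintype α] [Fintype β]
    (G : SimpleGraph α) (H : SimpleGraph β)
    (hG : G.Connected) (hH : H.Connected)
    (hα : 2 ≤ Fintype.card α) (hβ : 2 ≤ Fintype.card β)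
    (S : Set (α × β)) (a b : α × β) (p : (G □ H).Walk a b)
    (hp : p.IsPath) (hsupp : ∀ v ∈ p.support, v ∈ S) :
    (Prod.fst '' {v | v ∈ p.support}) ×ˢ (Prod.snd '' {v | v ∈ p.support}) ⊆
      cycleHull (G □ H) S := by
  rintro ⟨x, y⟩ ⟨⟨u, hu, rfl⟩, ⟨v, hv, rfl⟩⟩ T ⟨hST, hT⟩
  exact hT.mem_of_walk p (fun w hw => hST (hsupp w hw)) u hu v hv
end

section
/- Let G and H be finite simple connected graphs, each with at least two vertices, and let S be a cycle convex subset of V(G □ H) whose induced subgraph is connected. Then (1) S = π_G(S) × π_H(S), and (2) π_G(S) is cycle convex in G and π_H(S) is cycle convex in H. -/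
open SimpleGraph

namespace IsCycleConvex

/-- A vertex with two neighbours in a connected cycle convex set belongs to that set. -/
theorem mem_of_adj_adj {V : Type*} {G : SimpleGraph V} {S : Set V} (hS : IsCycleConvex G S)
    (hconn : (G.induce S).Connected) {a b w : V} (ha : a ∈ S) (hb : b ∈ S) (hab : a ≠ b)
    (hwa : G.Adj w a) (hwb : G.Adj w b) : w ∈ S := by
  by_contra hw
  obtain ⟨p, hp⟩ := hconn.exists_isPath ⟨a, ha⟩ ⟨b, hb⟩
  let f : G.induce S ↪g G.induce (S ∪ {w}) := induceHomOfLE G Set.subset_union_left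
  let w' : ↥(S ∪ {w}) := ⟨w, Set.mem_union_right S rfl⟩
  have hf : ∀ x : S, f x ≠ w' := fun x h =>
    have hxw : x.1 = w := congrArg Subtype.val h
    hw (hxw ▸ x.2)
  have hwa' : (G.induce (S ∪ {w})).Adj w' (f ⟨a, ha⟩) := hwa
  have hbw' : (G.induce (S ∪ {w})).Adj (f ⟨b, hb⟩) w' := hwb.symm
  have hsupp : w' ∉ (p.map f.toHom).support := by
    rw [Walk.support_map]
    intro h
    obtain ⟨x, -, hx⟩ := List.mem_map.1 h
    exact hf x hx
  refine hS w hw ⟨Walk.cons hwa' ((p.map f.toHom).concat hbw'), ?_⟩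
  rw [Walk.cons_isCycle_iff]
  refine ⟨(hp.map f.injective).concat hsupp hbw', fun h => ?_⟩
  rw [Walk.edges_concat, List.concat_eq_append, List.mem_append, List.mem_singleton] at h
  rcases h with h | h
  · exact hsupp (Walk.fst_mem_support_of_mem_edges _ h)
  · rw [Sym2.eq_swap, Sym2.congr_left] at h
    exact hab (congrArg Subtype.val h)

end IsCycleConvex

/-- A set containing every vertex with two neighbours in it is cycle convex. -/
theorem isCycleConvex_of_adj_adj {V : Type*} {G : SimpleGraph V} {S : Set V}
    (h : ∀ w a b, a ∈ S → b ∈ S → a ≠ b → G.Adj w a → G.Adj w b → w ∈ S) :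
    IsCycleConvex G S := by
  rintro w hw ⟨c, hc⟩
  have mem_of_adj : ∀ x : ↥(S ∪ {w}), G.Adj w x → x.1 ∈ S := fun x hx =>
    x.2.resolve_right fun hxw => hx.ne (Set.mem_singleton_iff.1 hxw).symm
  have hsnd : G.Adj w c.snd := c.adj_snd hc.not_nil
  have hpen : G.Adj w c.penultimate := (c.adj_penultimate hc.not_nil).symm
  exact hw (h w c.snd c.penultimate (mem_of_adj _ hsnd) (mem_of_adj _ hpen)
    (fun he => hc.snd_ne_penultimate (Subtype.ext he)) hsnd hpen)

/-- In a box product, if a set contains every vertex with two neighbours in it, then for a walk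
inside the set from `x` to `y`, the row of `y` contains each vertex of the row of `x` that is
joined to `x` inside that row. -/
theorem mem_of_walk_of_reflTransGen {α β : Type*} {G : SimpleGraph α} {H : SimpleGraph β}
    {S : Set (α × β)}
    (hS : ∀ {a b w}, a ∈ S → b ∈ S → a ≠ b → (G □ H).Adj w a → (G □ H).Adj w b → w ∈ S)
    {x y : S} (p : ((G □ H).induce S).Walk x y) {g : α}
    (hg : Relation.ReflTransGen (fun u v => G.Adj u v ∧ (v, x.1.2) ∈ S) x.1.1 g) :
    (g, y.1.2) ∈ S := by
  induction p with
  | @nil x =>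
    rcases hg.cases_tail with h | ⟨_, -, -, h⟩
    · exact h ▸ x.2
    · exact h
  | @cons x x' y hadj p ih =>
    obtain ⟨⟨a, h⟩, hx⟩ := x
    obtain ⟨⟨a', h'⟩, hx'⟩ := x'
    rcases boxProd_adj.1 (show (G □ H).Adj (a, h) (a', h') from hadj) with
      ⟨haa, rfl : h = h'⟩ | ⟨hhh, rfl : a = a'⟩
    · exact ih (hg.head ⟨haa.symm, hx⟩)
    · suffices key : Relation.ReflTransGen (fun u v => G.Adj u v ∧ (v, h') ∈ S) a g ∧
          (g, h') ∈ S from ih key.1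
      clear ih
      dsimp only at hg hhh
      induction hg with
      | refl => exact ⟨.refl, hx'⟩
      | @tail u v _ huv ihu =>
        have hv : (v, h') ∈ S := hS huv.2 ihu.2 (fun he => hhh.ne (Prod.ext_iff.1 he).2)
          (boxProd_adj.2 (.inr ⟨hhh.symm, rfl⟩)) (boxProd_adj.2 (.inl ⟨huv.1.symm, rfl⟩))
        exact ⟨ihu.1.tail ⟨huv.1, hv⟩, hv⟩

/-- A cycle convex set of G □ H inducing a connected subgraph is the product of
its projections, and its projections are cycle convex in the factors. -/
theorem stmt_17 {α β : Type*} [Fintype α] [Fintype β]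
    (G : SimpleGraph α) (H : SimpleGraph β)
    (hG : G.Connected) (hH : H.Connected)
    (hα : 2 ≤ Fintype.card α) (hβ : 2 ≤ Fintype.card β)
    (S : Set (α × β)) (hconv : IsCycleConvex (G □ H) S)
    (hconn : ((G □ H).induce S).Connected) :
    S = (Prod.fst '' S) ×ˢ (Prod.snd '' S) ∧
      IsCycleConvex G (Prod.fst '' S) ∧ IsCycleConvex H (Prod.snd '' S) := by
  have hS : ∀ {a b w}, a ∈ S → b ∈ S → a ≠ b → (G □ H).Adj w a → (G □ H).Adj w b → w ∈ S :=
    hconv.mem_of_adj_adj hconn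
  have hprod : ∀ {x y}, x ∈ S → y ∈ S → (x.1, y.2) ∈ S := fun {x y} hx hy =>
    have ⟨p⟩ := hconn.preconnected ⟨x, hx⟩ ⟨y, hy⟩
    mem_of_walk_of_reflTransGen hS p .refl
  refine ⟨?_, isCycleConvex_of_adj_adj ?_, isCycleConvex_of_adj_adj ?_⟩
  · ext z
    constructor
    · exact fun hz => ⟨⟨z, hz, rfl⟩, ⟨z, hz, rfl⟩⟩
    · rintro ⟨⟨x, hx, hxz⟩, ⟨y, hy, hyz⟩⟩
      have := hprod hx hy
      rwa [hxz, hyz] at this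
  · rintro w _ _ ⟨x, hx, rfl⟩ ⟨y, hy, rfl⟩ hne hwx hwy
    exact ⟨(w, x.2), hS hx (hprod hy hx) (fun he => hne (Prod.ext_iff.1 he).1)
      (boxProd_adj.2 (.inl ⟨hwx, rfl⟩)) (boxProd_adj.2 (.inl ⟨hwy, rfl⟩)), rfl⟩
  · rintro w _ _ ⟨x, hx, rfl⟩ ⟨y, hy, rfl⟩ hne hwx hwy
    exact ⟨(x.1, w), hS hx (hprod hx hy) (fun he => hne (Prod.ext_iff.1 he).2)
      (boxProd_adj.2 (.inr ⟨hwx, rfl⟩)) (boxProd_adj.2 (.inr ⟨hwy, rfl⟩)), rfl⟩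
end
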